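/- Let m_1, l_2, m_2, k be positive integers with m_1 < l_2 ≤ m_2. Then f_k([1,m_1] ∪ [l_2,m_2]) = Σ_{d=1}^{m_2} μ(d) · C(⌊m_1/d⌋ + ⌊m_2/d⌋ − ⌊(l_2−1)/d⌋, k), where C(·,·) denotes the binomial coefficient. -/

import Mathlib

/-!
Replace the condition `gcd X = 1` by `∑ d ∣ gcd X, μ d`, which is its indicator function, and
exchange the two sums. The coefficient of `μ d` is then the number of `k`-subsets all of whose
elements are multiples of `d`, that is, of `k`-subsets of the multiples of `d` in the given set.
-/

open ArithmeticFunction Finset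
open scoped ArithmeticFunction.Moebius

theorem sum_moebius_filter_dvd {n N : ℕ} (hn : n ∈ Icc 1 N) :
    ∑ d ∈ Icc 1 N with d ∣ n, μ d = if n = 1 then 1 else 0 := by
  obtain ⟨hn_pos, hn_le⟩ := mem_Icc.mp hn
  have divisors_eq : {d ∈ Icc 1 N | d ∣ n} = n.divisors := by
    ext d
    simp only [mem_filter, mem_Icc, Nat.mem_divisors]
    constructor
    · exact fun ⟨_, hd⟩ ↦ ⟨hd, Nat.ne_of_gt hn_pos⟩
    · exact fun ⟨hd, _⟩ ↦
        ⟨⟨Nat.pos_of_dvd_of_pos hd hn_pos, (Nat.le_of_dvd hn_pos hd).trans hn_le⟩, hd⟩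
  rw [divisors_eq, ← coe_mul_zeta_apply, moebius_mul_coe_zeta, one_apply]

theorem card_filter_eq_one_eq_sum_moebius {ι : Type*} {s : Finset ι} {g : ι → ℕ} {N : ℕ}
    (hg : ∀ i ∈ s, g i ∈ Icc 1 N) :
    (#{i ∈ s | g i = 1} : ℤ) = ∑ d ∈ Icc 1 N, μ d * #{i ∈ s | d ∣ g i} :=
  calc (#{i ∈ s | g i = 1} : ℤ)
    _ = ∑ i ∈ s, ∑ d ∈ Icc 1 N with d ∣ g i, μ d := by
      rw [natCast_card_filter]
      exact sum_congr rfl fun i hi ↦ (sum_moebius_filter_dvd (hg i hi)).symm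
    _ = ∑ d ∈ Icc 1 N, ∑ i ∈ s with d ∣ g i, μ d := by
      simp only [sum_filter]
      exact sum_comm
    _ = ∑ d ∈ Icc 1 N, μ d * #{i ∈ s | d ∣ g i} := by
      simp only [sum_const, nsmul_eq_mul, mul_comm]

theorem filter_powersetCard_forall_mem {ι : Type*} (s : Finset ι) (k : ℕ) (p : ι → Prop)
    [DecidablePred p] :
    {t ∈ s.powersetCard k | ∀ i ∈ t, p i} = {i ∈ s | p i}.powersetCard k := by
  ext t
  simp only [mem_filter, mem_powersetCard, subset_iff, forall_and, and_right_comm]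

theorem card_filter_powersetCard_dvd_gcd {ι α : Type*} [CommMonoidWithZero α]
    [NormalizedGCDMonoid α] (s : Finset ι) (k : ℕ) (f : ι → α) (a : α)
    [DecidablePred (a ∣ ·)] :
    #{t ∈ s.powersetCard k | a ∣ t.gcd f} = (#{i ∈ s | a ∣ f i}).choose k := by
  simp only [Finset.dvd_gcd_iff, filter_powersetCard_forall_mem, card_powersetCard]

theorem finset_gcd_mem_Icc_one {ι : Type*} {t : Finset ι} {f : ι → ℕ} {N : ℕ} (ht : t.Nonempty)
    (hf : ∀ i ∈ t, f i ∈ Icc 1 N) : t.gcd f ∈ Icc 1 N := by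
  obtain ⟨i, hi⟩ := ht
  obtain ⟨hi_pos, hi_le⟩ := mem_Icc.mp (hf i hi)
  have gcd_dvd_i : t.gcd f ∣ f i := gcd_dvd hi
  exact mem_Icc.mpr
    ⟨Nat.pos_of_dvd_of_pos gcd_dvd_i hi_pos, (Nat.le_of_dvd hi_pos gcd_dvd_i).trans hi_le⟩

theorem card_filter_powersetCard_gcd_eq_one {ι : Type*} {s : Finset ι} {f : ι → ℕ} {N k : ℕ}
    (hf : ∀ i ∈ s, f i ∈ Icc 1 N) (hk : k ≠ 0) :
    (#{t ∈ s.powersetCard k | t.gcd f = 1} : ℤ) =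
      ∑ d ∈ Icc 1 N, μ d * (#{i ∈ s | d ∣ f i}).choose k := by
  have gcd_mem : ∀ t ∈ s.powersetCard k, t.gcd f ∈ Icc 1 N := by
    intro t ht
    obtain ⟨hts, rfl⟩ := mem_powersetCard.mp ht
    exact finset_gcd_mem_Icc_one (card_ne_zero.mp hk) fun i hi ↦ hf i (hts hi)
  simp only [card_filter_eq_one_eq_sum_moebius gcd_mem, card_filter_powersetCard_dvd_gcd]

theorem card_Ioc_filter_dvd (a b d : ℕ) : #{x ∈ Ioc a b | d ∣ x} = b / d - a / d := by
  obtain hab | hba := le_total a b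
  · have sdiff_eq : {x ∈ Ioc a b | d ∣ x} = {x ∈ Ioc 0 b | d ∣ x} \ {x ∈ Ioc 0 a | d ∣ x} := by
      grind
    rw [sdiff_eq, card_sdiff_of_subset (filter_subset_filter _ (Ioc_subset_Ioc_right hab)),
      Nat.Ioc_filter_dvd_card_eq_div, Nat.Ioc_filter_dvd_card_eq_div]
  · rw [Ioc_eq_empty_of_le hba, filter_empty, card_empty,
      Nat.sub_eq_zero_of_le (Nat.div_le_div_right hba)]

theorem card_Icc_filter_dvd {a : ℕ} (ha : a ≠ 0) (b d : ℕ) :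
    #{x ∈ Icc a b | d ∣ x} = b / d - (a - 1) / d := by
  rw [← card_Ioc_filter_dvd, Ioc_sub_one_left_eq_Icc_of_not_isMin (by simpa using ha)]

theorem card_Icc_union_Icc_filter_dvd {l₁ m₁ l₂ : ℕ} (hl₁ : l₁ ≠ 0) (h : m₁ < l₂) (m₂ d : ℕ) :
    #{x ∈ Icc l₁ m₁ ∪ Icc l₂ m₂ | d ∣ x} =
      (m₁ / d - (l₁ - 1) / d) + (m₂ / d - (l₂ - 1) / d) := by
  have disj : Disjoint (Icc l₁ m₁) (Icc l₂ m₂) :=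
    disjoint_left.mpr fun x hx₁ hx₂ ↦ by grind
  rw [filter_union, card_union_of_disjoint (disjoint_filter_filter disj),
    card_Icc_filter_dvd hl₁, card_Icc_filter_dvd (Nat.ne_zero_of_lt h)]

/-- Theorem (special case): `f_k([1,m₁] ∪ [l₂,m₂]) =
∑_{d=1}^{m₂} μ(d) C(⌊m₁/d⌋ + ⌊m₂/d⌋ - ⌊(l₂-1)/d⌋, k)`, where `f_k(A)` counts
the `k`-element relatively prime subsets of `A`. -/
theorem stmt_8 (m₁ l₂ m₂ k : ℕ) (hm₁ : 0 < m₁) (hk : 0 < k)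
    (h₁ : m₁ < l₂) (h₂ : l₂ ≤ m₂) :
    ((((Finset.Icc 1 m₁ ∪ Finset.Icc l₂ m₂).powerset).filter
        (fun X : Finset ℕ => X.card = k ∧ X.gcd id = 1)).card : ℤ)
      = ∑ d ∈ Finset.Icc 1 m₂,
          (ArithmeticFunction.moebius d) *
            (Nat.choose (m₁ / d + m₂ / d - (l₂ - 1) / d) k) := by
  have mem_range : ∀ x ∈ Icc 1 m₁ ∪ Icc l₂ m₂, id x ∈ Icc 1 m₂ := by
    grind
  have card_multiples (d : ℕ) :
      #{x ∈ Icc 1 m₁ ∪ Icc l₂ m₂ | d ∣ x} = m₁ / d + m₂ / d - (l₂ - 1) / d := by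
    rw [card_Icc_union_Icc_filter_dvd one_ne_zero h₁, Nat.sub_self, Nat.zero_div, Nat.sub_zero,
      Nat.add_sub_assoc (Nat.div_le_div_right ((Nat.sub_le l₂ 1).trans h₂))]
  rw [← filter_filter, ← powersetCard_eq_filter,
    card_filter_powersetCard_gcd_eq_one mem_range hk.ne']
  simp only [id, card_multiples]
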